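/- (Variation diminishing) Let μ > 0 and let f : [0,1] → ℝ be of bounded variation on [0,1]. Then for every positive integer n, ‖L_n f‖_{BV_μ} ≤ ‖f‖_{BV_μ}, where ‖g‖_{BV_μ} := Var_{[0,1]}(g/ln_μ) + |g(0)| and Var_{[0,1]} denotes the total (Jordan) variation on [0,1]. -/

import Mathlib

open Real Filter Set

/-- `logμ μ x = ln(1+μ+x)`. -/
noncomputable def logμ (μ x : ℝ) : ℝ := Real.log (1 + μ + x)

/-- `a μ n x = ln(1 + x/(n(1+μ))) / ln(1 + 1/(n(1+μ)))`. -/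
noncomputable def aFun (μ : ℝ) (n : ℕ) (x : ℝ) : ℝ :=
  Real.log (1 + x / (n * (1 + μ))) / Real.log (1 + 1 / (n * (1 + μ)))

/-- Bernstein basis polynomial `p_{n,k}(y) = C(n,k) y^k (1-y)^(n-k)`. -/
noncomputable def pB (n k : ℕ) (y : ℝ) : ℝ :=
  (n.choose k : ℝ) * y ^ k * (1 - y) ^ (n - k)

/-- Classical Bernstein operator. -/
noncomputable def Bop (n : ℕ) (g : ℝ → ℝ) (y : ℝ) : ℝ :=
  ∑ k ∈ Finset.range (n + 1), g ((k : ℝ) / (n : ℝ)) * pB n k y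

/-- Bernstein-type logarithmic operator `L_n`. -/
noncomputable def Lop (μ : ℝ) (n : ℕ) (f : ℝ → ℝ) (x : ℝ) : ℝ :=
  logμ μ x * ∑ k ∈ Finset.range (n + 1),
    f ((k : ℝ) / (n : ℝ)) * (1 / logμ μ ((k : ℝ) / (n : ℝ))) * pB n k (aFun μ n x)

/-!
On `[0, 1]`, `L_n f / ln_μ` is the Bernstein polynomial of `f / ln_μ` composed with `a_n`, a
monotone self-map of `[0, 1]` fixing `0`. Hence `L_n f 0 = f 0`, and it suffices that Bernstein
polynomials diminish variation. Let `H_k = ∑_{j < k} p_{n,j}`. The derivative of `H_{k+1}`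
telescopes to `-n p_{n-1,k} ≤ 0`, so `H_{k+1}` falls from `1` to `0` for `k < n`. Summation by parts
gives `∑_k c_k p_{n,k} = c_n - ∑_{k < n} (c_{k+1} - c_k) H_{k+1}`, whose variation is therefore at
most `∑_{k < n} |c_{k+1} - c_k|`.
-/

open Polynomial

theorem eVariationOn_Icc_le_of_dist_le_sub {α E : Type*} [LinearOrder α] [PseudoMetricSpace E]
    {f : α → E} {g : α → ℝ} {a b : α} (hab : a ≤ b)
    (h : ∀ x ∈ Icc a b, ∀ y ∈ Icc a b, x ≤ y → dist (f x) (f y) ≤ g y - g x) :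
    eVariationOn f (Icc a b) ≤ ENNReal.ofReal (g b - g a) := by
  have hg : MonotoneOn g (Icc a b) := fun x hx y hy hxy =>
    sub_nonneg.mp (dist_nonneg.trans (h x hx y hy hxy))
  have hle : eVariationOn f (Icc a b) ≤ eVariationOn g (Icc a b) := by
    refine iSup_mono fun ⟨m, u, hu, hmem⟩ => Finset.sum_le_sum fun i _ => ?_
    rw [edist_comm, edist_dist, edist_dist]
    exact ENNReal.ofReal_le_ofReal
      ((h _ (hmem i) _ (hmem (i + 1)) (hu i.le_succ)).trans (le_abs_self _))
  have heq := hg.eVariationOn_eq (left_mem_Icc.mpr hab) (right_mem_Icc.mpr hab)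
  rw [inter_self] at heq
  exact hle.trans_eq heq

section BernsteinPartialSum

variable (R : Type*) [CommRing R] (n : ℕ)

/-- The sum of the first `k` Bernstein polynomials of degree `n`: at `y ∈ [0, 1]`, the probability
that a binomial variable with parameters `n` and `y` is less than `k`. -/
noncomputable def bernsteinPartialSum (k : ℕ) : R[X] :=
  ∑ j ∈ Finset.range k, bernsteinPolynomial R n j

theorem derivative_bernsteinPartialSum_succ (k : ℕ) :
    derivative (bernsteinPartialSum R n (k + 1)) = -n * bernsteinPolynomial R (n - 1) k := by
  induction k with
  | zero => simp [bernsteinPartialSum, bernsteinPolynomial.derivative_zero]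
  | succ k ih =>
    rw [bernsteinPartialSum, Finset.sum_range_succ, derivative_add, ← bernsteinPartialSum, ih,
      bernsteinPolynomial.derivative_succ]
    ring

theorem eval_zero_bernsteinPartialSum_succ (k : ℕ) :
    (bernsteinPartialSum R n (k + 1)).eval 0 = 1 := by
  simp [bernsteinPartialSum, eval_finsetSum, bernsteinPolynomial.eval_at_0]

variable {n} in
theorem eval_one_bernsteinPartialSum {k : ℕ} (hk : k ≤ n) :
    (bernsteinPartialSum R n k).eval 1 = 0 := by
  simp [bernsteinPartialSum, eval_finsetSum, bernsteinPolynomial.eval_at_1, hk]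

theorem sum_smul_bernsteinPolynomial_by_parts (c : ℕ → R) :
    ∑ k ∈ Finset.range (n + 1), c k • bernsteinPolynomial R n k =
      c n • 1 - ∑ k ∈ Finset.range n, (c (k + 1) - c k) • bernsteinPartialSum R n (k + 1) := by
  rw [Finset.sum_range_by_parts, Nat.add_sub_cancel, bernsteinPolynomial.sum]
  rfl

end BernsteinPartialSum

theorem eval_bernsteinPolynomial_nonneg (n k : ℕ) {y : ℝ} (hy : y ∈ Icc (0 : ℝ) 1) :
    0 ≤ (bernsteinPolynomial ℝ n k).eval y :=
  bernstein_nonneg (x := ⟨y, hy⟩)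

theorem antitoneOn_eval_bernsteinPartialSum (n k : ℕ) :
    AntitoneOn (fun y : ℝ => (bernsteinPartialSum ℝ n k).eval y) (Icc 0 1) := by
  cases k with
  | zero => simp [bernsteinPartialSum, antitoneOn_const]
  | succ k =>
    refine antitoneOn_of_deriv_nonpos (convex_Icc 0 1) (Polynomial.continuousOn _)
      (Polynomial.differentiableOn _) fun y hy => ?_
    rw [Polynomial.deriv, derivative_bernsteinPartialSum_succ, eval_mul, eval_neg, eval_natCast]
    exact mul_nonpos_of_nonpos_of_nonneg (neg_nonpos.mpr n.cast_nonneg)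
      (eval_bernsteinPolynomial_nonneg _ _ (interior_subset hy))

theorem eVariationOn_sum_smul_bernsteinPolynomial_le (n : ℕ) (c : ℕ → ℝ) :
    eVariationOn (fun y => (∑ k ∈ Finset.range (n + 1), c k • bernsteinPolynomial ℝ n k).eval y)
        (Icc 0 1) ≤
      ENNReal.ofReal (∑ k ∈ Finset.range n, |c (k + 1) - c k|) := by
  set H : ℕ → ℝ → ℝ := fun k y => (bernsteinPartialSum ℝ n k).eval y with hH
  set g : ℝ → ℝ := fun y => -∑ k ∈ Finset.range n, |c (k + 1) - c k| * H (k + 1) y with hg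
  have hincrement : g 1 - g 0 = ∑ k ∈ Finset.range n, |c (k + 1) - c k| := by
    have hg_one : g 1 = 0 := neg_eq_zero.mpr <| Finset.sum_eq_zero fun k hk => by
      simp only [hH, eval_one_bernsteinPartialSum ℝ (Finset.mem_range.mp hk), mul_zero]
    have hg_zero : g 0 = -∑ k ∈ Finset.range n, |c (k + 1) - c k| := by
      simp only [hg, hH, eval_zero_bernsteinPartialSum_succ, mul_one]
    rw [hg_one, hg_zero, zero_sub, neg_neg]
  rw [← hincrement]
  refine eVariationOn_Icc_le_of_dist_le_sub zero_le_one fun x hx y hy hxy => ?_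
  simp only [sum_smul_bernsteinPolynomial_by_parts, eval_sub, eval_smul, eval_finsetSum,
    eval_one, smul_eq_mul, dist_sub_left]
  calc dist (∑ k ∈ Finset.range n, (c (k + 1) - c k) * H (k + 1) x)
        (∑ k ∈ Finset.range n, (c (k + 1) - c k) * H (k + 1) y)
      ≤ ∑ k ∈ Finset.range n,
          dist ((c (k + 1) - c k) * H (k + 1) x) ((c (k + 1) - c k) * H (k + 1) y) :=
        dist_sum_sum_le _ _ _
    _ = ∑ k ∈ Finset.range n, |c (k + 1) - c k| * (H (k + 1) x - H (k + 1) y) := by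
        refine Finset.sum_congr rfl fun k _ => ?_
        rw [Real.dist_eq, ← mul_sub, abs_mul, abs_of_nonneg
          (sub_nonneg.mpr (antitoneOn_eval_bernsteinPartialSum n (k + 1) hx hy hxy))]
    _ = g y - g x := by
        simp only [hg, mul_sub, Finset.sum_sub_distrib]
        ring

theorem sum_abs_sub_div_le_eVariationOn (g : ℝ → ℝ) (n : ℕ) :
    ENNReal.ofReal (∑ k ∈ Finset.range n, |g ((k + 1 : ℕ) / n) - g (k / n)|) ≤
      eVariationOn g (Icc 0 1) := by
  have hmono : Monotone fun k : ℕ => (k / n : ℝ) := fun i j hij => by dsimp only; gcongr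
  have hmem : ∀ k ≤ n, (k / n : ℝ) ∈ Icc (0 : ℝ) 1 := fun k hk =>
    ⟨by positivity, div_le_one_of_le₀ (Nat.cast_le.mpr hk) n.cast_nonneg⟩
  simpa only [ENNReal.ofReal_sum_of_nonneg fun _ _ => abs_nonneg _, edist_dist, Real.dist_eq]
    using eVariationOn.sum_le_of_monotoneOn_Iic (f := g) (hmono.monotoneOn _) hmem

theorem pB_eq_eval_bernsteinPolynomial (n k : ℕ) (y : ℝ) :
    pB n k y = (bernsteinPolynomial ℝ n k).eval y := by
  simp [pB, bernsteinPolynomial]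

theorem Bop_eq_eval_sum_smul (n : ℕ) (g : ℝ → ℝ) (y : ℝ) :
    Bop n g y =
      (∑ k ∈ Finset.range (n + 1), g (k / n) • bernsteinPolynomial ℝ n k).eval y := by
  simp only [Bop, pB_eq_eval_bernsteinPolynomial, eval_finsetSum, eval_smul, smul_eq_mul]

theorem Bop_zero_right (n : ℕ) (g : ℝ → ℝ) : Bop n g 0 = g 0 := by
  simp [Bop_eq_eval_sum_smul, eval_finsetSum, bernsteinPolynomial.eval_at_0]

theorem eVariationOn_Bop_le (n : ℕ) (g : ℝ → ℝ) :
    eVariationOn (Bop n g) (Icc 0 1) ≤ eVariationOn g (Icc 0 1) := by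
  rw [funext (Bop_eq_eval_sum_smul n g)]
  exact (eVariationOn_sum_smul_bernsteinPolynomial_le n fun k => g (k / n)).trans
    (sum_abs_sub_div_le_eVariationOn g n)

section LogarithmicOperator

variable {μ : ℝ}

theorem logμ_pos {x : ℝ} (h : 0 < μ + x) : 0 < logμ μ x :=
  Real.log_pos (by linarith)

theorem aFun_zero_right (μ : ℝ) (n : ℕ) : aFun μ n 0 = 0 := by
  simp [aFun]

theorem monotoneOn_aFun (hμ : -1 < μ) (n : ℕ) : MonotoneOn (aFun μ n) (Ici 0) := by
  intro x hx y _ hxy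
  have hμ' : 0 < 1 + μ := by linarith
  have hx' : 0 ≤ x := hx
  have hlog : 0 ≤ Real.log (1 + 1 / (n * (1 + μ))) :=
    Real.log_nonneg (le_add_of_nonneg_right (by positivity))
  unfold aFun
  gcongr

theorem mapsTo_aFun_Icc (hμ : -1 < μ) (n : ℕ) : MapsTo (aFun μ n) (Icc 0 1) (Icc 0 1) := by
  intro x hx
  constructor
  · simpa only [aFun_zero_right] using monotoneOn_aFun hμ n self_mem_Ici hx.1 hx.1
  · exact (monotoneOn_aFun hμ n hx.1 (mem_Ici.mpr zero_le_one) hx.2).trans (div_self_le_one _)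

theorem Lop_eq_logμ_mul_Bop (μ : ℝ) (n : ℕ) (f : ℝ → ℝ) (x : ℝ) :
    Lop μ n f x = logμ μ x * Bop n (fun t => f t / logμ μ t) (aFun μ n x) := by
  simp only [Lop, Bop, mul_one_div]

theorem Lop_zero_right (hμ : 0 < μ) (n : ℕ) (f : ℝ → ℝ) : Lop μ n f 0 = f 0 := by
  rw [Lop_eq_logμ_mul_Bop, aFun_zero_right, Bop_zero_right,
    mul_div_cancel₀ _ (logμ_pos (by rwa [add_zero])).ne']

theorem eVariationOn_Lop_div_logμ_le (hμ : 0 < μ) (n : ℕ) (f : ℝ → ℝ) :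
    eVariationOn (fun x => Lop μ n f x / logμ μ x) (Icc 0 1) ≤
      eVariationOn (fun x => f x / logμ μ x) (Icc 0 1) := by
  set g : ℝ → ℝ := fun t => f t / logμ μ t
  have hμ' : -1 < μ := by linarith
  calc eVariationOn (fun x => Lop μ n f x / logμ μ x) (Icc 0 1)
      = eVariationOn (Bop n g ∘ aFun μ n) (Icc 0 1) := eVariationOn.congr fun x hx => by
        rw [Lop_eq_logμ_mul_Bop, mul_div_cancel_left₀ _ (logμ_pos (by linarith [hx.1])).ne',
          Function.comp_apply]
    _ ≤ eVariationOn (Bop n g) (Icc 0 1) :=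
        eVariationOn.comp_le_of_monotoneOn _ _ ((monotoneOn_aFun hμ' n).mono Icc_subset_Ici_self)
          (mapsTo_aFun_Icc hμ' n)
    _ ≤ eVariationOn g (Icc 0 1) := eVariationOn_Bop_le n g

end LogarithmicOperator

theorem stmt17 (μ : ℝ) (hμ : 0 < μ) (f : ℝ → ℝ)
    (hf : BoundedVariationOn f (Set.Icc (0:ℝ) 1)) (n : ℕ) (hn : 0 < n) :
    eVariationOn (fun x => Lop μ n f x / logμ μ x) (Set.Icc (0:ℝ) 1)
        + ENNReal.ofReal |Lop μ n f 0| ≤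
      eVariationOn (fun x => f x / logμ μ x) (Set.Icc (0:ℝ) 1)
        + ENNReal.ofReal |f 0| := by
  rw [Lop_zero_right hμ]
  gcongr
  exact eVariationOn_Lop_div_logμ_le hμ n f
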